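/- arXiv:1103.0247 — 5 statements merged into one kernel-verified Lean document; each statement's English description precedes it below -/
import Mathlib

section
/- Let Y be a separable Banach space containing no subspace isomorphic to ℓ¹(ℕ). Then the following are equivalent: (i) the dual space Y* is separable; (ii) every equivalent norm on Y* is Ba((Y*)_w)-measurable. -/
/-- The Baire σ-algebra of the weak topology of a normed space `X`. -/
def BaW (X : Type*) [NormedAddCommGroup X] [NormedSpace ℝ X] : MeasurableSpace X :=
  ⨆ φ : X →L[ℝ] ℝ, MeasurableSpace.comap φ Real.measurableSpace

/-- `N` is an equivalent norm on `X`. -/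
def IsEquivNorm {X : Type*} [NormedAddCommGroup X] [NormedSpace ℝ X] (N : X → ℝ) : Prop :=
  (∀ x y : X, N (x + y) ≤ N x + N y) ∧
  (∀ (a : ℝ) (x : X), N (a • x) = |a| * N x) ∧
  ∃ c C : ℝ, 0 < c ∧ 0 < C ∧ ∀ x : X, c * ‖x‖ ≤ N x ∧ N x ≤ C * ‖x‖

/-!
If `Y*` is separable, the sublevel sets of an equivalent norm, being closed and convex, are
countable intersections of half-spaces.

For the converse, let `K` be the dual ball with its weak* topology, a compact metrizable space.
When `Y` contains no `ℓ¹`, every `G ∈ Y**` is Borel on `K`: otherwise, on some closed subset of `K`,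
both `{G < r}` and `{G > s}` are dense for some `r < s`, and Helly's theorem produces a bounded
sequence in `Y` that is Boolean independent on `K`, hence equivalent to the `ℓ¹` basis. So every
`Ba((Y*)_w)`-measurable norm is Borel on `K`, which has only continuum many Borel sets.

If `Y*` is not separable, Stegall's construction, a dyadic tree of weak* open sets in `K` along
which Helly's theorem gives almost biorthogonal vectors of `Y`, yields in the limit points `y t ∈ K`
and a bounded family `g t ∈ Y**`, `t ∈ 2^ℕ`, with `g t (y s) = δ_{st}`. For `A ⊆ 2^ℕ` the
equivalent norm `max (‖f‖ / 2) (sup_{t ∈ A} |g t f|)` exceeds `1 / 2` at `y t` exactly when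
`t ∈ A`, so these norms cannot all be Borel on `K`.
-/

open Filter MeasureTheory Metric Set TopologicalSpace Topology

section WeakBaire

variable {X : Type*} [NormedAddCommGroup X] [NormedSpace ℝ X]

theorem measurable_baW_iff {Ω : Type*} [MeasurableSpace Ω] {F : Ω → X} :
    Measurable[_, BaW X] F ↔ ∀ φ : X →L[ℝ] ℝ, Measurable fun ω => φ (F ω) := by
  simp only [BaW, measurable_iff_comap_le, MeasurableSpace.comap_iSup, iSup_le_iff,
    MeasurableSpace.comap_comp, Function.comp_def]

theorem measurable_baW_of_convexOn [SeparableSpace X] {N : X → ℝ} (hconv : ConvexOn ℝ univ N)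
    (hlsc : LowerSemicontinuous N) : Measurable[BaW X] N := by
  let _ : MeasurableSpace X := BaW X
  have hφ : ∀ φ : X →L[ℝ] ℝ, Measurable φ := measurable_baW_iff.1 measurable_id
  have : SecondCountableTopology X := UniformSpace.secondCountable_of_separable X
  refine measurable_of_Iic fun a => ?_
  have hsublevel : Convex ℝ (N ⁻¹' Iic a) := by simpa using! hconv.convex_le a
  obtain ⟨l, c, hlc⟩ := RCLike.iInter_countable_halfSpaces_eq (𝕜 := ℝ) hsublevel
    (hlsc.isClosed_preimage a)
  rw [← hlc]
  exact MeasurableSet.iInter fun n => measurableSet_le (hφ (l n)) measurable_const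

/-- The seminorm underlying an equivalent norm. -/
def IsEquivNorm.toSeminorm {N : X → ℝ} (hN : IsEquivNorm N) : Seminorm ℝ X :=
  Seminorm.of N hN.1 hN.2.1

theorem IsEquivNorm.continuous {N : X → ℝ} (hN : IsEquivNorm N) : Continuous N := by
  obtain ⟨-, -, _, C, -, hC, hbound⟩ := id hN
  refine Seminorm.continuous_of_le (p := hN.toSeminorm) (q := C.toNNReal • normSeminorm ℝ X)
    (continuous_norm.const_smul C.toNNReal) fun x => (hbound x).2.trans_eq ?_
  simp [NNReal.smul_def, hC.le]

theorem IsEquivNorm.measurable_baW [SeparableSpace X] {N : X → ℝ} (hN : IsEquivNorm N) :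
    Measurable[BaW X] N :=
  measurable_baW_of_convexOn hN.toSeminorm.convexOn hN.continuous.lowerSemicontinuous

end WeakBaire

theorem exists_isEquivNorm_lt_iff_mem {X T : Type*} [NormedAddCommGroup X] [NormedSpace ℝ X]
    {y : T → X} {g : T → X →L[ℝ] ℝ} {M : ℝ}
    (hy : ∀ t, ‖y t‖ ≤ 1) (hg : ∀ t, ‖g t‖ ≤ M)
    (hone : ∀ t, g t (y t) = 1) (hzero : ∀ s t, s ≠ t → g t (y s) = 0) (A : Set T) :
    ∃ N : X → ℝ, IsEquivNorm N ∧ ∀ t, 1 / 2 < N (y t) ↔ t ∈ A := by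
  let q : A → Seminorm ℝ X := fun t => (g t).toLinearMap.toSeminorm
  have hq : ∀ t x, q t x ≤ M * ‖x‖ := fun t x => (g t).le_of_opNorm_le (hg t) x
  have hbdd : BddAbove (range q) := Seminorm.bddAbove_range_iff.2 fun x =>
    ⟨M * ‖x‖, forall_mem_range.2 fun t => hq t x⟩
  let N : Seminorm ℝ X := (1 / 2 : NNReal) • normSeminorm ℝ X ⊔ ⨆ t, q t
  have hN : ∀ x, N x = max (1 / 2 * ‖x‖) (⨆ t, q t x) := fun x => by
    simp only [N, Seminorm.sup_apply, Seminorm.iSup_apply hbdd]; rfl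
  refine ⟨N, ⟨map_add_le_add N, map_smul_eq_mul N, 1 / 2, max (1 / 2) M, by norm_num,
    by positivity, fun x => ⟨?_, ?_⟩⟩, fun t => ⟨fun ht => ?_, fun ht => ?_⟩⟩
  · exact (le_max_left _ _).trans_eq (hN x).symm
  · rw [hN]
    refine max_le (by gcongr; exact le_max_left _ _) (Real.iSup_le (fun t => ?_) (by positivity))
    exact (hq t x).trans (by gcongr; exact le_max_right _ _)
  · by_contra htA
    have hvanish : ∀ s : A, q s (y t) ≤ 0 := fun s => by
      simp [q, hzero t s (ne_of_mem_of_not_mem s.2 htA).symm]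
    refine ht.not_ge ((hN _).trans_le (max_le (by linarith [hy t]) ?_))
    exact (Real.iSup_le hvanish le_rfl).trans (by norm_num)
  · have hqt : q ⟨t, ht⟩ (y t) = 1 := by simp [q, hone]
    calc (1 / 2 : ℝ) < q ⟨t, ht⟩ (y t) := by rw [hqt]; norm_num
      _ ≤ ⨆ s, q s (y t) := le_ciSup (f := fun s => q s (y t))
        (Seminorm.bddAbove_range_iff.1 hbdd _) _
      _ ≤ N (y t) := (le_max_right _ _).trans_eq (hN _).symm

theorem exists_not_measurableSet_of_injective {Ω T : Type*} [MeasurableSpace Ω]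
    [MeasurableSpace.CountablyGenerated Ω] (hT : Cardinal.continuum ≤ Cardinal.mk T)
    {F : Set T → Set Ω} (hF : Function.Injective F) : ∃ A, ¬ MeasurableSet (F A) := by
  by_contra! hmeas
  obtain ⟨b, hb, rfl⟩ := ‹MeasurableSpace.CountablyGenerated Ω›.isCountablyGenerated
  have hcard := MeasurableSpace.cardinal_measurableSet_le_continuum (s := b)
    (hb.le_aleph0.trans Cardinal.aleph0_le_continuum)
  have hinj := Cardinal.lift_mk_le_lift_mk_of_injective
    (f := fun A => (⟨F A, hmeas A⟩ : {s | MeasurableSet[.generateFrom b] s}))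
    fun _ _ h => hF (congrArg Subtype.val h)
  have hle := hinj.trans (Cardinal.lift_le.2 hcard)
  have hlt := Cardinal.lift_lt.2 (hT.trans_lt (Cardinal.cantor (Cardinal.mk T)))
  rw [← Cardinal.mk_set, Cardinal.lift_continuum] at hlt
  rw [Cardinal.lift_continuum] at hle
  exact (hlt.trans_le hle).false

theorem exists_isClosed_nonempty_forall_isOpen_inter {K : Type*} [TopologicalSpace K]
    [HereditarilyLindelofSpace K] {P : Set K → Prop} (hmono : ∀ ⦃s t⦄, s ⊆ t → P t → P s)
    (hunion : ∀ S : Set (Set K), S.Countable → (∀ s ∈ S, P s) → P (⋃₀ S)) (huniv : ¬ P univ) :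
    ∃ A : Set K, IsClosed A ∧ A.Nonempty ∧
      ∀ W, IsOpen W → (W ∩ A).Nonempty → ¬ P (W ∩ A) := by
  let U : Set K := ⋃₀ {W | IsOpen W ∧ P W}
  have hU : P U := (HereditarilyLindelofSpace.isLindelof U).induction_on hmono hunion
    fun x ⟨W, hW, hxW⟩ => ⟨W, mem_nhdsWithin_of_mem_nhds (hW.1.mem_nhds hxW), hW.2⟩
  have hUopen : IsOpen U := isOpen_sUnion fun W hW => hW.1
  refine ⟨Uᶜ, hUopen.isClosed_compl, ?_, fun W hW ⟨x, hxW, hxU⟩ hPW => hxU ?_⟩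
  · rw [nonempty_compl]
    exact fun h => huniv (h ▸ hU)
  · refine ⟨W, ⟨hW, hmono ?_ (hunion {W ∩ Uᶜ, U} (by simp) (by simp [hPW, hU]))⟩, hxW⟩
    rw [sUnion_pair, inter_comm, ← sdiff_eq_compl_inter, sdiff_union_self]
    exact subset_union_left

section HereditarilyLindelof

variable {K : Type*} [TopologicalSpace K] [HereditarilyLindelofSpace K] [MeasurableSpace K]
  [OpensMeasurableSpace K] {h : K → ℝ}

theorem exists_measurableSet_between_of_forall_isClosed_not_dense {r s : ℝ}
    (hh : ∀ A : Set K, IsClosed A → A.Nonempty →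
      Dense {a : A | h a < r} → ¬ Dense {a : A | s < h a}) :
    ∃ C, MeasurableSet C ∧ {k | h k < r} ⊆ C ∧ C ⊆ {k | h k ≤ s} := by
  let Sep : Set K → Prop := fun S =>
    ∃ C, MeasurableSet C ∧ S ∩ {k | h k < r} ⊆ C ∧ C ⊆ {k | h k ≤ s}
  suffices hsep : Sep univ by simpa [Sep] using hsep
  by_contra huniv
  obtain ⟨A, hAclosed, hAne, hA⟩ := exists_isClosed_nonempty_forall_isOpen_inter (P := Sep)
    (fun S T hST ⟨C, hC, hTC, hCs⟩ => ⟨C, hC, by grind, hCs⟩)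
    (fun 𝒮 h𝒮 hSep => by
      choose! C hC hSC hCs using hSep
      refine ⟨⋃ S ∈ 𝒮, C S, .biUnion h𝒮 hC, ?_, iUnion₂_subset hCs⟩
      rw [sUnion_eq_biUnion, iUnion₂_inter]
      exact iUnion₂_mono hSC) huniv
  refine hh A hAclosed hAne ?_ ?_
  all_goals
    refine dense_iff_inter_open.2 fun V hV hVne => ?_
    obtain ⟨W, hW, rfl⟩ := isOpen_induced_iff.1 hV
    by_contra hempty
    refine hA W hW (by simpa [inter_comm] using hVne.image Subtype.val) ?_
  · exact ⟨∅, .empty, fun k hk => hempty ⟨⟨k, hk.1.2⟩, hk.1.1, hk.2⟩, empty_subset _⟩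
  · exact ⟨W ∩ A, hW.measurableSet.inter hAclosed.measurableSet, inter_subset_left,
      fun k hk => mem_ofPred.2 <| not_lt.1 fun hlt => hempty ⟨⟨k, hk.2⟩, hk.1, hlt⟩⟩

theorem measurable_of_forall_isClosed_not_dense
    (hh : ∀ A : Set K, IsClosed A → A.Nonempty → ∀ r s, r < s →
      Dense {a : A | h a < r} → ¬ Dense {a : A | s < h a}) :
    Measurable h := by
  refine measurable_of_Iio fun a => ?_
  have hsep : ∀ r s, r < s → ∃ C, MeasurableSet C ∧ {k | h k < r} ⊆ C ∧ C ⊆ {k | h k ≤ s} :=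
    fun r s hrs => exists_measurableSet_between_of_forall_isClosed_not_dense
      fun A hA hAne => hh A hA hAne r s hrs
  choose! C hC hrC hCs using hsep
  have hIio : h ⁻¹' Iio a = ⋃ (p : ℚ × ℚ) (_ : (p.1 : ℝ) < p.2 ∧ (p.2 : ℝ) < a), C p.1 p.2 := by
    refine Subset.antisymm (fun k hk => ?_)
      (iUnion₂_subset fun p hp k hk => (hCs _ _ hp.1 hk).trans_lt hp.2)
    obtain ⟨r, hkr, hra⟩ := exists_rat_btwn (show h k < a from hk)
    obtain ⟨s, hrs, hsa⟩ := exists_rat_btwn hra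
    exact mem_iUnion₂.2 ⟨(r, s), ⟨hrs, hsa⟩, hrC _ _ hrs hkr⟩
  rw [hIio]
  exact .iUnion fun p => .iUnion fun hp => hC _ _ hp.1

end HereditarilyLindelof

section EllOne

variable {Y : Type*} [NormedAddCommGroup Y] [NormedSpace ℝ Y]

/-- `Y` contains an isomorphic copy of `ℓ¹(ℕ)` as a closed subspace. -/
def ContainsEllOne (Y : Type*) [NormedAddCommGroup Y] [NormedSpace ℝ Y] : Prop :=
  ∃ S : Submodule ℝ Y, IsClosed (S : Set Y) ∧ Nonempty (lp (fun _ : ℕ => ℝ) 1 ≃L[ℝ] S)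

theorem hasSum_abs_ellOne (a : lp (fun _ : ℕ => ℝ) 1) : HasSum (fun i => |a i|) ‖a‖ := by
  simpa using lp.hasSum_norm (by norm_num) a

theorem exists_clm_ellOne_hasSum [CompleteSpace Y] {x : ℕ → Y} {M : ℝ} (hx : ∀ n, ‖x n‖ ≤ M) :
    ∃ T : lp (fun _ : ℕ => ℝ) 1 →L[ℝ] Y, ∀ a, HasSum (fun i => a i • x i) (T a) := by
  have hterm : ∀ (a : lp (fun _ : ℕ => ℝ) 1) i, ‖a i • x i‖ ≤ |a i| * M := fun a i => by
    rw [norm_smul, Real.norm_eq_abs]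
    exact mul_le_mul_of_nonneg_left (hx i) (abs_nonneg _)
  have hsum : ∀ a : lp (fun _ : ℕ => ℝ) 1, Summable fun i => a i • x i := fun a =>
    .of_norm_bounded ((hasSum_abs_ellOne a).summable.mul_right M) (hterm a)
  let T : lp (fun _ : ℕ => ℝ) 1 →ₗ[ℝ] Y :=
    { toFun := fun a => ∑' i, a i • x i
      map_add' := fun a b => by simp [← (hsum a).tsum_add (hsum b), add_smul]
      map_smul' := fun c a => by simp [← (hsum a).tsum_const_smul, mul_smul] }
  have hT : ∀ a, ‖T a‖ ≤ M * ‖a‖ := fun a => by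
    rw [mul_comm]
    exact tsum_of_norm_bounded ((hasSum_abs_ellOne a).mul_right M) (hterm a)
  exact ⟨T.mkContinuous M hT, fun a => (hsum a).hasSum⟩

theorem containsEllOne_of_sum_abs_le [CompleteSpace Y] {x : ℕ → Y} {M C : ℝ}
    (hx : ∀ n, ‖x n‖ ≤ M)
    (hlower : ∀ n (a : ℕ → ℝ), ∑ i ∈ Finset.range n, |a i| ≤
      C * ‖∑ i ∈ Finset.range n, a i • x i‖) :
    ContainsEllOne Y := by
  obtain ⟨T, hT⟩ := exists_clm_ellOne_hasSum hx
  have hbound : ∀ a, ‖a‖ ≤ C * ‖T a‖ := fun a =>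
    le_of_tendsto_of_tendsto' (hasSum_abs_ellOne a).tendsto_sum_nat
      ((hT a).tendsto_sum_nat.norm.const_mul C) fun n => hlower n a
  have hanti : AntilipschitzWith C.toNNReal T := T.antilipschitz_of_bound fun a =>
    (hbound a).trans (by gcongr; exact Real.le_coe_toNNReal C)
  have hclosed : IsClosed (range T) := hanti.isClosed_range T.uniformContinuous
  exact ⟨T.range, hclosed, ⟨T.equivRange hanti.injective hclosed⟩⟩

end EllOne

/-- Helly's theorem, a local form of Goldstine's. -/
theorem exists_norm_le_forall_abs_apply_sub_lt {Y ι : Type*} [NormedAddCommGroup Y]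
    [NormedSpace ℝ Y] [Finite ι] (f : ι → Y →L[ℝ] ℝ) {G : (Y →L[ℝ] ℝ) →L[ℝ] ℝ} {M ε : ℝ}
    (hG : ‖G‖ < M) (hε : 0 < ε) :
    ∃ x : Y, ‖x‖ ≤ M ∧ ∀ i, |f i x - G (f i)| < ε := by
  classical
  have := Fintype.ofFinite ι
  have hM : 0 < M := (norm_nonneg G).trans_lt hG
  let T : Y →L[ℝ] (ι → ℝ) := ContinuousLinearMap.pi f
  suffices hc : (fun i => G (f i)) ∈ closure (T '' closedBall 0 M) by
    obtain ⟨_, ⟨x, hx, rfl⟩, hdist⟩ := Metric.mem_closure_iff.1 hc ε hε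
    rw [dist_comm, dist_pi_lt_iff hε] at hdist
    exact ⟨x, mem_closedBall_zero_iff.1 hx, hdist⟩
  by_contra hc
  have hconv : Convex ℝ (closure (T '' closedBall 0 M)) :=
    ((convex_closedBall (0 : Y) M).linear_image T.toLinearMap).closure
  obtain ⟨g, u, hgu, hug⟩ := geometric_hahn_banach_closed_point hconv isClosed_closure hc
  have hg : ∀ v : ι → ℝ, g v = ∑ i, g (Pi.single i 1) * v i := fun v => by
    conv_lhs => rw [pi_eq_sum_univ' v]
    simp [mul_comm]
  let F : Y →L[ℝ] ℝ := ∑ i, g (Pi.single i 1) • f i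
  have hF : ∀ x ∈ closedBall (0 : Y) M, ‖F x‖ ≤ u := fun x hx => by
    have hFg : ∀ z, F z = g (T z) := fun z => by rw [hg]; simp [F, T]
    refine abs_le'.2 ⟨?_, ?_⟩
    · rw [hFg]
      exact (hgu _ (subset_closure ⟨x, hx, rfl⟩)).le
    · rw [← map_neg, hFg]
      exact (hgu _ (subset_closure ⟨-x, by simpa using hx, rfl⟩)).le
  have hnorm : M * ‖F‖ ≤ u := by
    have hu : 0 ≤ u := (norm_nonneg _).trans (hF 0 (by simp [hM.le]))
    rw [mul_comm, ← le_div_iff₀ hM]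
    exact F.opNorm_le_bound (by positivity)
      (LinearMap.bound_of_ball_bound' hM u F.toLinearMap hF)
  refine hug.not_ge ?_
  calc g (fun i => G (f i)) = G F := by rw [hg]; simp [F]
    _ ≤ ‖G‖ * ‖F‖ := (le_abs_self _).trans (G.le_opNorm F)
    _ ≤ M * ‖F‖ := by gcongr
    _ ≤ u := hnorm

section Independence

theorem exists_injective_forall_image_range {α : Type*} [DecidableEq α] {P : Finset α → Prop}
    (hempty : P ∅) (hstep : ∀ S, P S → ∃ a ∉ S, P (insert a S)) :
    ∃ x : ℕ → α, Function.Injective x ∧ ∀ n, P ((Finset.range n).image x) := by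
  obtain ⟨a, -, -⟩ := hstep ∅ hempty
  have : Nonempty α := ⟨a⟩
  choose! next hnot_mem hinsert using hstep
  let S : ℕ → Finset α := fun n => (fun S => insert (next S) S)^[n] ∅
  have hsucc : ∀ n, S (n + 1) = insert (next (S n)) (S n) := fun n =>
    Function.iterate_succ_apply' _ n ∅
  have hP : ∀ n, P (S n) := fun n => by
    induction n with
    | zero => exact hempty
    | succ n ih => exact hsucc n ▸ hinsert _ ih
  have himage : ∀ n, S n = (Finset.range n).image fun m => next (S m) := fun n => by
    induction n with
    | zero => rfl
    | succ n ih => rw [hsucc, Finset.range_add_one, Finset.image_insert, ← ih]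
  refine ⟨fun n => next (S n), Function.Injective.of_lt_imp_ne fun m n hmn heq => ?_,
    fun n => himage n ▸ hP n⟩
  refine hnot_mem _ (hP n) ?_
  rw [← heq, himage n]
  exact Finset.mem_image_of_mem (fun m => next (S m)) (Finset.mem_range.2 hmn)

variable {Y κ : Type*} [NormedAddCommGroup Y] [NormedSpace ℝ Y]

/-- Boolean independence, in the sense of Rosenthal, of the pairs
`({k | s < F k x}, {k | F k x < r})`, `x ∈ S`: every pattern of "high" and "low" values on `S`
is realised by one of the functionals `F k`. -/
def IsBooleanIndependent (F : κ → Y →L[ℝ] ℝ) (r s : ℝ) (S : Finset Y) : Prop :=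
  ∀ T ⊆ S, ∃ k, (∀ x ∈ T, s < F k x) ∧ ∀ x ∈ S, x ∉ T → F k x < r

theorem IsBooleanIndependent.sum_abs_le {F : κ → Y →L[ℝ] ℝ} {r s R : ℝ} {S : Finset Y}
    (hS : IsBooleanIndependent F r s S) (hrs : r < s) (hF : ∀ k, ‖F k‖ ≤ R) (a : Y → ℝ) :
    ∑ x ∈ S, |a x| ≤ 2 * R / (s - r) * ‖∑ x ∈ S, a x • x‖ := by
  obtain ⟨k, hk_high, hk_low⟩ := hS {x ∈ S | 0 ≤ a x} (S.filter_subset _)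
  obtain ⟨l, hl_high, hl_low⟩ := hS {x ∈ S | ¬ 0 ≤ a x} (S.filter_subset _)
  have hterm : ∀ x ∈ S, (s - r) * |a x| ≤ a x * (F k x - F l x) := fun x hx => by
    by_cases ha : 0 ≤ a x
    · have := hk_high x (by simp [hx, ha])
      have := hl_low x hx (by simp [ha])
      rw [abs_of_nonneg ha]
      nlinarith
    · have := hk_low x hx (by simp [ha])
      have := hl_high x (by simp [hx, not_le.1 ha])
      rw [abs_of_neg (not_le.1 ha)]
      nlinarith
  have hnorm : ‖F k - F l‖ ≤ 2 * R := (norm_sub_le _ _).trans (by linarith [hF k, hF l])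
  rw [div_mul_eq_mul_div, le_div_iff₀ (sub_pos.2 hrs), mul_comm, Finset.mul_sum]
  calc ∑ x ∈ S, (s - r) * |a x| ≤ ∑ x ∈ S, a x * (F k x - F l x) := Finset.sum_le_sum hterm
    _ = (F k - F l) (∑ x ∈ S, a x • x) := by simp
    _ ≤ ‖(F k - F l) (∑ x ∈ S, a x • x)‖ := le_abs_self _
    _ ≤ 2 * R * ‖∑ x ∈ S, a x • x‖ := (F k - F l).le_of_opNorm_le hnorm _

theorem containsEllOne_of_forall_isBooleanIndependent [CompleteSpace Y] {F : κ → Y →L[ℝ] ℝ}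
    {r s R M : ℝ} (hrs : r < s) (hF : ∀ k, ‖F k‖ ≤ R) {x : ℕ → Y} (hinj : Function.Injective x)
    (hx : ∀ n, ‖x n‖ ≤ M)
    (hind : ∀ n, IsBooleanIndependent F r s ((Finset.range n).map ⟨x, hinj⟩)) :
    ContainsEllOne Y :=
  containsEllOne_of_sum_abs_le hx fun n a => by
    simpa [hinj.extend_apply] using (hind n).sum_abs_le hrs hF (Function.extend x a 0)

variable [TopologicalSpace κ] {F : κ → Y →L[ℝ] ℝ} {G : (Y →L[ℝ] ℝ) →L[ℝ] ℝ} {r s : ℝ}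

theorem IsBooleanIndependent.exists_mem_dense (hcont : ∀ x, Continuous fun k => F k x)
    {S : Finset Y} (hS : IsBooleanIndependent F r s S) {D : Set κ} (hD : Dense D)
    {T : Finset Y} (hT : T ⊆ S) :
    ∃ k ∈ D, (∀ x ∈ T, s < F k x) ∧ ∀ x ∈ S, x ∉ T → F k x < r := by
  classical
  let W : Set κ := (⋂ x ∈ T, {k | s < F k x}) ∩ ⋂ x ∈ S \ T, {k | F k x < r}
  have hW : IsOpen W :=
    (isOpen_biInter_finset fun x _ => isOpen_lt continuous_const (hcont x)).inter
      (isOpen_biInter_finset fun x _ => isOpen_lt (hcont x) continuous_const)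
  have hWne : W.Nonempty := (hS T hT).imp fun k hk => by simpa [W] using hk
  obtain ⟨k, hkW, hkD⟩ := hD.inter_open_nonempty W hW hWne
  exact ⟨k, hkD, by simpa [W] using hkW⟩

/-- The new vector imitates `G` on a low and on a high witness of each pattern on `S`. -/
theorem IsBooleanIndependent.exists_insert [DecidableEq Y] (hcont : ∀ x, Continuous fun k => F k x)
    (hlow : Dense {k | G (F k) < r}) (hhigh : Dense {k | s < G (F k)}) {r' s' M : ℝ}
    (hr : r < r') (hrs : r' ≤ s') (hs : s' < s) (hG : ‖G‖ < M) {S : Finset Y}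
    (hS : IsBooleanIndependent F r' s' S) :
    ∃ x ∉ S, ‖x‖ ≤ M ∧ IsBooleanIndependent F r' s' (insert x S) := by
  choose low hGlow hlow_gt hlow_lt using fun T : S.powerset =>
    hS.exists_mem_dense hcont hlow (Finset.mem_powerset.1 T.2)
  choose high hGhigh hhigh_gt hhigh_lt using fun T : S.powerset =>
    hS.exists_mem_dense hcont hhigh (Finset.mem_powerset.1 T.2)
  simp only [mem_ofPred] at hGlow hGhigh
  obtain ⟨x, hxM, hx⟩ := exists_norm_le_forall_abs_apply_sub_lt
    (Sum.elim (fun T => F (low T)) fun T => F (high T)) hG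
    (lt_min (sub_pos.2 hr) (sub_pos.2 hs))
  have hxlow : ∀ T, F (low T) x < r' := fun T => by
    have : F (low T) x - G (F (low T)) < r' - r :=
      (abs_lt.1 ((hx (.inl T)).trans_le (min_le_left _ _))).2
    linarith [hGlow T]
  have hxhigh : ∀ T, s' < F (high T) x := fun T => by
    have : -(s - s') < F (high T) x - G (F (high T)) :=
      (abs_lt.1 ((hx (.inr T)).trans_le (min_le_right _ _))).1
    linarith [hGhigh T]
  refine ⟨x, fun hxS => ?_, hxM, fun T hT => ?_⟩
  · linarith [hlow_gt ⟨S, by simp⟩ x hxS, hxlow ⟨S, by simp⟩]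
  · let T' : S.powerset := ⟨T.erase x, Finset.mem_powerset.2 (Finset.subset_insert_iff.1 hT)⟩
    by_cases hxT : x ∈ T
    · exact ⟨high T', by grind, by grind⟩
    · exact ⟨low T', by grind, by grind⟩

theorem containsEllOne_of_dense_lt_of_dense_gt [CompleteSpace Y] [Nonempty κ]
    (hcont : ∀ x, Continuous fun k => F k x) {R : ℝ} (hF : ∀ k, ‖F k‖ ≤ R) (hrs : r < s)
    (hlow : Dense {k | G (F k) < r}) (hhigh : Dense {k | s < G (F k)}) :
    ContainsEllOne Y := by
  classical
  obtain ⟨r', hr, hr's⟩ := exists_between hrs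
  obtain ⟨s', hrs', hs⟩ := exists_between hr's
  obtain ⟨x, hinj, hx⟩ := exists_injective_forall_image_range
    (P := fun S => (∀ x ∈ S, ‖x‖ ≤ ‖G‖ + 1) ∧ IsBooleanIndependent F r' s' S)
    ⟨by simp, fun T hT => by simp [Finset.subset_empty.1 hT]⟩
    (fun S ⟨hSnorm, hS⟩ => by
      obtain ⟨x, hxS, hxM, hind⟩ :=
        hS.exists_insert hcont hlow hhigh hr hrs'.le hs (lt_add_one ‖G‖)
      exact ⟨x, hxS, by simpa using ⟨hxM, hSnorm⟩, hind⟩)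
  refine containsEllOne_of_forall_isBooleanIndependent hrs' hF hinj
    (fun n => (hx (n + 1)).1 _ (Finset.mem_image_of_mem x (Finset.self_mem_range_succ n)))
    fun n => ?_
  simpa [Finset.map_eq_image] using (hx n).2

end Independence

section DualBall

variable {Y : Type*} [NormedAddCommGroup Y] [NormedSpace ℝ Y]

/-- The closed unit ball of the dual of `Y`, with the weak* topology. -/
abbrev DualBall (Y : Type*) [NormedAddCommGroup Y] [NormedSpace ℝ Y] : Type _ :=
  (WeakDual.toStrongDual ⁻¹' closedBall (0 : StrongDual ℝ Y) 1 : Set (WeakDual ℝ Y))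

namespace DualBall

/-- The functional underlying a point of the weak* dual ball, as a point of the normed dual. -/
noncomputable def toDual (f : DualBall Y) : Y →L[ℝ] ℝ :=
  WeakDual.toStrongDual f.1

theorem norm_toDual_le (f : DualBall Y) : ‖f.toDual‖ ≤ 1 :=
  mem_closedBall_zero_iff.1 f.2

theorem exists_toDual_eq {f : Y →L[ℝ] ℝ} (hf : ‖f‖ ≤ 1) : ∃ k : DualBall Y, k.toDual = f :=
  ⟨⟨StrongDual.toWeakDual f, mem_closedBall_zero_iff.2 hf⟩, rfl⟩

theorem continuous_toDual_apply (x : Y) : Continuous fun f : DualBall Y => f.toDual x :=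
  (WeakDual.eval_continuous x).comp continuous_subtype_val

instance : CompactSpace (DualBall Y) :=
  isCompact_iff_compactSpace.1 (WeakDual.isCompact_closedBall (0 : StrongDual ℝ Y) 1)

instance [SeparableSpace Y] : SecondCountableTopology (DualBall Y) :=
  have : MetrizableSpace (DualBall Y) :=
    WeakDual.metrizable_of_isCompact ℝ _ _ (WeakDual.isCompact_closedBall (0 : StrongDual ℝ Y) 1)
  inferInstance

theorem measurable_toDual [CompleteSpace Y] [SeparableSpace Y] [MeasurableSpace (DualBall Y)]
    [OpensMeasurableSpace (DualBall Y)] (hY : ¬ ContainsEllOne Y) :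
    Measurable[_, BaW (Y →L[ℝ] ℝ)] (toDual : DualBall Y → Y →L[ℝ] ℝ) :=
  measurable_baW_iff.2 fun _ => measurable_of_forall_isClosed_not_dense
    fun _ _ hne _ _ hrs hlow hhigh =>
      have := hne.to_subtype
      hY <| containsEllOne_of_dense_lt_of_dense_gt
        (fun x => (continuous_toDual_apply x).comp continuous_subtype_val)
        (fun k => norm_toDual_le k.1) hrs hlow hhigh

end DualBall

end DualBall

section NonseparableDual

variable {X : Type*} [NormedAddCommGroup X] [NormedSpace ℝ X]

/-- A functional of norm less than `M` vanishes on `Z` and takes the value `1` at `f`; this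
witnesses that `f` has distance more than `M⁻¹` from the closed linear span of `Z`. -/
def IsFarFrom (M : ℝ) (Z : Set X) (f : X) : Prop :=
  ∃ G : X →L[ℝ] ℝ, ‖G‖ < M ∧ G f = 1 ∧ ∀ z ∈ Z, G z = 0

theorem IsFarFrom.anti {M : ℝ} {Z Z' : Set X} {f : X} (hf : IsFarFrom M Z' f) (hZ : Z ⊆ Z') :
    IsFarFrom M Z f :=
  let ⟨G, hGM, hGf, hGZ⟩ := hf
  ⟨G, hGM, hGf, fun z hz => hGZ z (hZ hz)⟩

theorem exists_clm_ne_zero_forall_mem_eq_zero (hX : ¬ SeparableSpace X) {Z : Set X}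
    (hZ : Z.Countable) : ∃ φ : X →L[ℝ] ℝ, φ ≠ 0 ∧ ∀ z ∈ Z, φ z = 0 := by
  let E : Submodule ℝ X := (Submodule.span ℝ Z).topologicalClosure
  have : IsClosed (E : Set X) := Submodule.isClosed_topologicalClosure _
  have hE : IsSeparable (E : Set X) := (hZ.isSeparable.span (R := ℝ)).closure
  obtain ⟨v, hv⟩ : ∃ v, v ∉ E := by
    by_contra! hall
    exact hX (isSeparable_univ_iff.1 (hE.mono fun v _ => hall v))
  obtain ⟨ψ, hψ⟩ := SeparatingDual.exists_ne_zero (R := ℝ) (x := E.mkQ v) (by simpa using hv)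
  refine ⟨ψ.comp E.mkQL, fun h => hψ (DFunLike.congr_fun h v), fun z hz => ?_⟩
  have hzE : E.mkQ z = 0 := (Submodule.Quotient.mk_eq_zero E).2
    (Submodule.le_topologicalClosure _ (Submodule.subset_span hz))
  exact (congrArg ψ hzE).trans (map_zero ψ)

theorem exists_norm_le_one_isFarFrom (hX : ¬ SeparableSpace X) {Z : Set X} (hZ : Z.Countable)
    {M : ℝ} (hM : 1 < M) : ∃ f : X, ‖f‖ ≤ 1 ∧ IsFarFrom M Z f := by
  obtain ⟨φ, hφ, hφZ⟩ := exists_clm_ne_zero_forall_mem_eq_zero hX hZ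
  obtain ⟨c, hc, hcM⟩ := exists_between hM
  let G : X →L[ℝ] ℝ := (c / ‖φ‖) • φ
  have hG : ‖G‖ = c := by
    rw [norm_smul, Real.norm_of_nonneg (by positivity), div_mul_cancel₀ _ (norm_ne_zero_iff.2 hφ)]
  obtain ⟨x, hx, hGx⟩ := G.exists_lt_apply_of_lt_opNorm (hc.trans_eq hG.symm)
  have hGx_ne : G x ≠ 0 := norm_pos_iff.1 (one_pos.trans hGx)
  refine ⟨(G x)⁻¹ • x, ?_, G, hG.trans_lt hcM, by simp [hGx_ne], fun z hz => by simp [G, hφZ z hz]⟩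
  rw [norm_smul, norm_inv]
  exact mul_le_one₀ (inv_le_one_of_one_le₀ hGx.le) (norm_nonneg x) hx.le

/-- On every nonempty open set, `F` takes values far from any prescribed countable set. -/
def EscapesCountableSets {κ : Type*} [TopologicalSpace κ] (F : κ → X) (M : ℝ) : Prop :=
  ∀ W : Set κ, IsOpen W → W.Nonempty → ∀ Z : Set X, Z.Countable → ∃ k ∈ W, IsFarFrom M Z (F k)

theorem exists_isClosed_escapesCountableSets {K : Type*} [TopologicalSpace K]
    [HereditarilyLindelofSpace K] {F : K → X} {M : ℝ}
    (hF : ∀ Z : Set X, Z.Countable → ∃ k, IsFarFrom M Z (F k)) :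
    ∃ A : Set K, IsClosed A ∧ A.Nonempty ∧ EscapesCountableSets (fun k : A => F k) M := by
  obtain ⟨A, hA, hne, hfar⟩ := exists_isClosed_nonempty_forall_isOpen_inter
    (P := fun S => ∃ Z : Set X, Z.Countable ∧ ∀ k ∈ S, ¬ IsFarFrom M Z (F k))
    (fun S T hST ⟨Z, hZ, hT⟩ => ⟨Z, hZ, fun k hk => hT k (hST hk)⟩)
    (fun 𝒮 h𝒮 hnear => by
      choose! Z hZ hnear using hnear
      exact ⟨⋃ S ∈ 𝒮, Z S, h𝒮.biUnion hZ, fun k ⟨S, hS, hk⟩ hfar =>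
        hnear S hS k hk (hfar.anti (subset_biUnion_of_mem hS))⟩)
    (fun ⟨Z, hZ, hnear⟩ => (hF Z hZ).elim fun k hk => hnear k (mem_univ k) hk)
  refine ⟨A, hA, hne, fun V hV hVne Z hZ => ?_⟩
  obtain ⟨W, hW, rfl⟩ := isOpen_induced_iff.1 hV
  have hWA : (W ∩ A).Nonempty := by simpa [inter_comm] using hVne.image Subtype.val
  by_contra! hnear
  exact hfar W hW hWA ⟨Z, hZ, fun k hk => hnear ⟨k, hk.2⟩ hk.1⟩

end NonseparableDual

section Tree

variable {Y κ : Type*} [NormedAddCommGroup Y] [NormedSpace ℝ Y] [TopologicalSpace κ]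
  {F : κ → Y →L[ℝ] ℝ} {M : ℝ}

/-- The nonempty open subsets of `κ`, ordered by inclusion. -/
abbrev NonemptyOpen (κ : Type*) [TopologicalSpace κ] : Type _ :=
  {U : Set κ // IsOpen U ∧ U.Nonempty}

theorem exists_refinement_abs_sub_single_lt {ι : Type*} [Finite ι] [DecidableEq ι]
    (hcont : ∀ x, Continuous fun k => F k x) (hesc : EscapesCountableSets F M)
    (U : ι → NonemptyOpen κ) {ε : ℝ} (hε : 0 < ε) (j : ι) :
    ∃ V ≤ U, ∃ x : Y, ‖x‖ ≤ M ∧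
      ∀ i, ∀ k ∈ (V i).1, |F k x - (Pi.single j 1 : ι → ℝ) i| < ε := by
  choose p hp using fun i => (U i).2.2
  obtain ⟨q, hqU, G, hGM, hGq, hGp⟩ := hesc (U j).1 (U j).2.1 (U j).2.2 (range fun i => F (p i))
    (countable_range _)
  let p' : ι → κ := Function.update p j q
  have hp' : ∀ i, p' i ∈ (U i).1 :=
    (Function.forall_update_iff p fun i k => k ∈ (U i).1).2 ⟨hqU, fun i _ => hp i⟩
  have hG : ∀ i, G (F (p' i)) = (Pi.single j 1 : ι → ℝ) i := fun i => by
    obtain rfl | hij := eq_or_ne i j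
    · simp [p', hGq]
    · simp [p', hij, hGp]
  obtain ⟨x, hxM, hx⟩ := exists_norm_le_forall_abs_apply_sub_lt (fun i => F (p' i)) hGM hε
  simp only [hG] at hx
  refine ⟨fun i => ⟨(U i).1 ∩ {k | |F k x - (Pi.single j 1 : ι → ℝ) i| < ε},
    (U i).2.1.inter ?_, p' i, hp' i, hx i⟩, fun i => inter_subset_left, x, hxM,
    fun i k hk => hk.2⟩
  exact isOpen_lt ((hcont x).sub continuous_const).abs continuous_const

theorem exists_refinement_forall_abs_sub_single_lt {ι : Type*} [Finite ι] [DecidableEq ι]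
    (hcont : ∀ x, Continuous fun k => F k x) (hesc : EscapesCountableSets F M)
    (U : ι → NonemptyOpen κ) {ε : ℝ} (hε : 0 < ε) :
    ∃ V ≤ U, ∀ j, ∃ x : Y, ‖x‖ ≤ M ∧
      ∀ i, ∀ k ∈ (V i).1, |F k x - (Pi.single j 1 : ι → ℝ) i| < ε := by
  have := Fintype.ofFinite ι
  suffices h : ∀ s : Finset ι, ∃ V ≤ U, ∀ j ∈ s, ∃ x : Y, ‖x‖ ≤ M ∧
      ∀ i, ∀ k ∈ (V i).1, |F k x - (Pi.single j 1 : ι → ℝ) i| < ε by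
    simpa using h Finset.univ
  intro s
  induction s using Finset.induction_on with
  | empty => exact ⟨U, le_rfl, by simp⟩
  | insert j s _ ih =>
    obtain ⟨V, hVU, hV⟩ := ih
    obtain ⟨V', hV'V, hV'⟩ := exists_refinement_abs_sub_single_lt hcont hesc V hε j
    refine ⟨V', hV'V.trans hVU, (Finset.forall_mem_insert _ _ _).2 ⟨hV', fun l hl => ?_⟩⟩
    obtain ⟨x, hxM, hx⟩ := hV l hl
    exact ⟨x, hxM, fun i k hk => hx i k (hV'V i hk)⟩

theorem exists_tree_abs_sub_single_lt [Nonempty κ] (hcont : ∀ x, Continuous fun k => F k x)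
    (hesc : EscapesCountableSets F M) {ε : ℕ → ℝ} (hε : ∀ n, 0 < ε n) :
    ∃ (V : ∀ n, (Fin n → Bool) → NonemptyOpen κ) (x : ∀ n, (Fin (n + 1) → Bool) → Y),
      (∀ n σ, V (n + 1) σ ≤ V n (Fin.init σ)) ∧ (∀ n σ, ‖x n σ‖ ≤ M) ∧
      ∀ n σ τ, ∀ k ∈ (V (n + 1) τ).1,
        |F k (x n σ) - (Pi.single σ 1 : (Fin (n + 1) → Bool) → ℝ) τ| < ε n := by
  choose next hnext x hxM hx using fun n (U : (Fin n → Bool) → NonemptyOpen κ) =>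
    exists_refinement_forall_abs_sub_single_lt hcont hesc
      (fun σ : Fin (n + 1) → Bool => U (Fin.init σ)) (hε n)
  let V : ∀ n, (Fin n → Bool) → NonemptyOpen κ := fun n =>
    Nat.rec (fun _ => ⟨univ, isOpen_univ, univ_nonempty⟩) next n
  exact ⟨V, fun n => x n (V n), fun n => hnext n (V n), fun n => hxM n (V n),
    fun n => hx n (V n)⟩

end Tree

section Biorthogonal

theorem exists_clm_apply_eq_of_tendsto {α E : Type*} [NormedAddCommGroup E] [NormedSpace ℝ E]
    {l : Filter α} [l.NeBot] {u : α → E →L[ℝ] ℝ} {M : ℝ} (hu : ∀ a, ‖u a‖ ≤ M) :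
    ∃ φ : E →L[ℝ] ℝ, ‖φ‖ ≤ M ∧ ∀ x c, Tendsto (fun a => u a x) l (𝓝 c) → φ x = c := by
  obtain ⟨φ, hφ, hcluster⟩ :=
    (WeakDual.isCompact_closedBall (0 : StrongDual ℝ E) M).exists_mapClusterPt (f := l)
      (u := fun a => StrongDual.toWeakDual (u a))
      (tendsto_principal.2 (.of_forall fun a => mem_closedBall_zero_iff.2 (hu a)))
  refine ⟨WeakDual.toStrongDual φ, mem_closedBall_zero_iff.1 hφ, fun x c hc => ?_⟩
  have hcluster_x : MapClusterPt (φ x) l fun a => u a x :=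
    hcluster.continuousAt_comp (WeakDual.eval_continuous x).continuousAt
  exact eq_of_nhds_neBot (ClusterPt.mono hcluster_x hc)

variable {Y κ : Type*} [NormedAddCommGroup Y] [NormedSpace ℝ Y] [TopologicalSpace κ]
  {F : κ → Y →L[ℝ] ℝ} {M : ℝ}

theorem exists_forall_mem_closure_branch [CompactSpace κ]
    {V : ∀ n, (Fin n → Bool) → NonemptyOpen κ} (hV : ∀ n σ, V (n + 1) σ ≤ V n (Fin.init σ))
    (t : ℕ → Bool) : ∃ p, ∀ n, p ∈ closure (V n fun i => t i).1 := by
  simpa only [nonempty_def, mem_iInter] using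
    IsCompact.nonempty_iInter_of_sequence_nonempty_isCompact_isClosed
      (fun n => closure (V n fun i => t i).1) (fun n => closure_mono (hV n _))
      (fun n => (V n _).2.2.closure) isClosed_closure.isCompact fun _ => isClosed_closure

theorem exists_forall_tendsto_branch [CompactSpace κ] [Nonempty κ]
    (hcont : ∀ x, Continuous fun k => F k x) (hesc : EscapesCountableSets F M) :
    ∃ (p : (ℕ → Bool) → κ) (x : (ℕ → Bool) → ℕ → Y), (∀ t n, ‖x t n‖ ≤ M) ∧
      (∀ t, Tendsto (fun n => F (p t) (x t n)) atTop (𝓝 1)) ∧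
      ∀ s t, s ≠ t → Tendsto (fun n => F (p s) (x t n)) atTop (𝓝 0) := by
  obtain ⟨V, x, hV, hxM, hx⟩ := exists_tree_abs_sub_single_lt hcont hesc
    (ε := fun n : ℕ => 1 / ((n : ℝ) + 1)) fun n => Nat.one_div_pos_of_nat
  choose p hp using exists_forall_mem_closure_branch hV
  let δ : (ℕ → Bool) → (ℕ → Bool) → ℕ → ℝ := fun s t n =>
    (Pi.single (fun i => t i) 1 : (Fin (n + 1) → Bool) → ℝ) fun i => s i
  have hlim : ∀ s t, Tendsto (fun n => F (p s) (x n fun i => t i) - δ s t n) atTop (𝓝 0) := by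
    refine fun s t => squeeze_zero_norm (fun n => ?_) tendsto_one_div_add_atTop_nhds_zero_nat
    have hclosed : IsClosed {k | |F k (x n fun i => t i) - δ s t n| ≤ 1 / ((n : ℝ) + 1)} :=
      isClosed_le ((hcont _).sub continuous_const).abs continuous_const
    exact closure_minimal (fun k hk => (hx n _ _ k hk).le) hclosed (hp s (n + 1))
  refine ⟨p, fun t n => x n fun i => t i, fun t n => hxM n _, fun t => ?_, fun s t hst => ?_⟩
  · simpa [δ] using (hlim t t).add_const 1
  · obtain ⟨m, hm⟩ := Function.ne_iff.1 hst
    refine (hlim s t).congr' ?_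
    filter_upwards [eventually_ge_atTop m] with n hn
    have hne : (fun i : Fin (n + 1) => s i) ≠ fun i : Fin (n + 1) => t i := fun h =>
      hm (congrFun h ⟨m, Nat.lt_succ_of_le hn⟩)
    simp [δ, hne]

theorem exists_biorthogonal_of_escapesCountableSets [CompactSpace κ] [Nonempty κ]
    (hcont : ∀ x, Continuous fun k => F k x) (hesc : EscapesCountableSets F M) :
    ∃ (p : (ℕ → Bool) → κ) (g : (ℕ → Bool) → (Y →L[ℝ] ℝ) →L[ℝ] ℝ), (∀ t, ‖g t‖ ≤ M) ∧
      (∀ t, g t (F (p t)) = 1) ∧ ∀ s t, s ≠ t → g t (F (p s)) = 0 := by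
  obtain ⟨p, x, hxM, hone, hzero⟩ := exists_forall_tendsto_branch hcont hesc
  choose g hgM hg using fun t => exists_clm_apply_eq_of_tendsto (l := atTop)
    (u := fun n => NormedSpace.inclusionInDoubleDual ℝ Y (x t n))
    fun n => (NormedSpace.double_dual_bound ℝ Y (x t n)).trans (hxM t n)
  exact ⟨p, g, hgM, fun t => hg t _ _ (hone t), fun s t hst => hg t _ _ (hzero s t hst)⟩

theorem exists_biorthogonal_of_not_separableSpace_dual [SeparableSpace Y]
    (hY : ¬ SeparableSpace (Y →L[ℝ] ℝ)) (hM : 1 < M) :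
    ∃ (y : (ℕ → Bool) → DualBall Y) (g : (ℕ → Bool) → (Y →L[ℝ] ℝ) →L[ℝ] ℝ), (∀ t, ‖g t‖ ≤ M) ∧
      (∀ t, g t (y t).toDual = 1) ∧ ∀ s t, s ≠ t → g t (y s).toDual = 0 := by
  obtain ⟨A, hA, hAne, hesc⟩ := exists_isClosed_escapesCountableSets
    (F := DualBall.toDual) (M := M) fun Z hZ => by
      obtain ⟨f, hf, hfar⟩ := exists_norm_le_one_isFarFrom hY hZ hM
      obtain ⟨k, rfl⟩ := DualBall.exists_toDual_eq hf
      exact ⟨k, hfar⟩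
  have := hAne.to_subtype
  have := isCompact_iff_compactSpace.1 hA.isCompact
  obtain ⟨p, g, hgM, hone, hzero⟩ := exists_biorthogonal_of_escapesCountableSets
    (fun x => (DualBall.continuous_toDual_apply x).comp continuous_subtype_val) hesc
  exact ⟨fun t => (p t).1, g, hgM, hone, hzero⟩

end Biorthogonal

/-- For a separable Banach space `Y` with no closed subspace isomorphic to `ℓ¹(ℕ)`,
the dual `Y*` is separable iff every equivalent norm on `Y*` is `Ba((Y*)_w)`-measurable. -/
theorem stmt9 (Y : Type*) [NormedAddCommGroup Y] [NormedSpace ℝ Y] [CompleteSpace Y]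
    [TopologicalSpace.SeparableSpace Y]
    (hl1 : ¬ ∃ S : Submodule ℝ Y, IsClosed (S : Set Y) ∧
      Nonempty (lp (fun _ : ℕ => ℝ) 1 ≃L[ℝ] S)) :
    TopologicalSpace.SeparableSpace (Y →L[ℝ] ℝ) ↔
      ∀ N : (Y →L[ℝ] ℝ) → ℝ, IsEquivNorm N →
        @Measurable _ ℝ (BaW (Y →L[ℝ] ℝ)) Real.measurableSpace N := by
  refine ⟨fun _ N hN => hN.measurable_baW, fun hmeas => ?_⟩
  by_contra hsep
  obtain ⟨y, g, hg, hone, hzero⟩ := exists_biorthogonal_of_not_separableSpace_dual hsep one_lt_two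
  choose N hN hNmem using
    exists_isEquivNorm_lt_iff_mem (fun t => (y t).norm_toDual_le) hg hone hzero
  borelize (DualBall Y)
  let F : Set (ℕ → Bool) → Set (DualBall Y) := fun A => {f | 1 / 2 < N A f.toDual}
  have hF_inj : Function.Injective F := fun A B hAB => Set.ext fun t => by
    rw [← hNmem A t, ← hNmem B t]
    exact Set.ext_iff.1 hAB (y t)
  obtain ⟨A, hA⟩ := exists_not_measurableSet_of_injective (by simp) hF_inj
  have hNmeas : Measurable fun f : DualBall Y => N A f.toDual :=
    @Measurable.comp _ _ _ _ (BaW _) _ _ _ (hmeas _ (hN A)) (DualBall.measurable_toDual hl1)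
  exact hA (measurableSet_lt measurable_const hNmeas)
end

section
/- Let Γ be a set and let A be a set in the product σ-algebra P(Γ) ⊗ P(Γ) on Γ × Γ. Define an equivalence relation ≈ on Γ by: γ ≈ γ' if and only if for every δ ∈ Γ one has (δ,γ) ∈ A ⇔ (δ,γ') ∈ A and (γ,δ) ∈ A ⇔ (γ',δ) ∈ A. Then ≈ has at most 𝔠 (the cardinality of the continuum) many equivalence classes. -/
/-- The σ-algebra on `Γ × Γ` generated by all rectangles `A ×ˢ B` with `A, B ⊆ Γ`. -/
def productSigma (Γ : Type*) : MeasurableSpace (Γ × Γ) :=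
  MeasurableSpace.generateFrom {S : Set (Γ × Γ) | ∃ A B : Set Γ, S = A ×ˢ B}

/-- The equivalence relation `≈` on `Γ` induced by a set `A ⊆ Γ × Γ`:
`γ ≈ γ'` iff for every `δ`, `(δ,γ) ∈ A ↔ (δ,γ') ∈ A` and `(γ,δ) ∈ A ↔ (γ',δ) ∈ A`. -/
def approxSetoid (Γ : Type*) (A : Set (Γ × Γ)) : Setoid Γ where
  r γ γ' := ∀ δ : Γ, (((δ, γ) ∈ A) ↔ ((δ, γ') ∈ A)) ∧ (((γ, δ) ∈ A) ↔ ((γ', δ) ∈ A))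
  iseqv := by
    refine ⟨fun _ _ => ⟨Iff.rfl, Iff.rfl⟩, fun h δ => ⟨(h δ).1.symm, (h δ).2.symm⟩,
      fun h1 h2 δ => ⟨(h1 δ).1.trans (h2 δ).1, (h1 δ).2.trans (h2 δ).2⟩⟩

/-!
A set in a generated σ-algebra already lies in the σ-algebra generated by countably many of the
generators. For a set in a product σ-algebra these are countably many rectangles `S ×ˢ T`, and the
section at `a` depends only on which of the countably many first sides `S` contain `a`; hence there
are at most `2 ^ ℵ₀` sections. A class of `≈` is determined by a horizontal and a vertical section.
-/

open Cardinal MeasurableSpace Set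
open scoped MeasureTheory

section Generators

variable {α : Type*}

theorem exists_countable_subset_measurableSet_generateFrom {C : Set (Set α)} {s : Set α}
    (hs : MeasurableSet[generateFrom C] s) :
    ∃ D ⊆ C, D.Countable ∧ MeasurableSet[generateFrom D] s := by
  induction s, hs using generateFrom_induction with
  | hC t ht =>
    exact ⟨{t}, singleton_subset_iff.2 ht, countable_singleton t,
      measurableSet_generateFrom (mem_singleton t)⟩
  | empty => exact ⟨∅, empty_subset C, countable_empty, measurableSet_empty _⟩
  | compl t _ ih =>
    obtain ⟨D, hDC, hD, ht⟩ := ih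
    exact ⟨D, hDC, hD, ht.compl⟩
  | iUnion t _ ih =>
    choose D hDC hD ht using ih
    refine ⟨⋃ n, D n, iUnion_subset hDC, countable_iUnion hD, MeasurableSet.iUnion fun n => ?_⟩
    exact generateFrom_mono (subset_iUnion D n) _ (ht n)

theorem mk_range_le_continuum_of_countable_separating {β : Type*} {f : α → β} {D : Set (Set α)}
    (hD : D.Countable) (hf : ∀ x y, (∀ t ∈ D, x ∈ t ↔ y ∈ t) → f x = f y) :
    #(range f) ≤ 𝔠 := by
  let trace (y : range f) : Set D := {t | rangeSplitting f y ∈ t.1}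
  have trace_injective : Function.Injective trace := by
    intro y z hyz
    have hfyz : f (rangeSplitting f y) = f (rangeSplitting f z) :=
      hf _ _ fun t ht => Set.ext_iff.1 hyz ⟨t, ht⟩
    simpa only [apply_rangeSplitting, SetCoe.ext_iff] using hfyz
  have mk_traces_le : #(Set D) ≤ 𝔠 := by
    rw [mk_set, ← two_power_aleph0]
    exact power_le_power_left two_ne_zero hD.le_aleph0
  rw [← lift_le_continuum]
  exact (lift_mk_le_lift_mk_of_injective trace_injective).trans (lift_le_continuum.2 mk_traces_le)

end Generators

section Sections

variable {α β : Type*} [MeasurableSpace α] [MeasurableSpace β] {s : Set (α × β)}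

theorem mk_range_preimage_prodMk_left_le_continuum (hs : MeasurableSet s) :
    #(range fun a => Prod.mk a ⁻¹' s) ≤ 𝔠 := by
  rw [← generateFrom_prod] at hs
  obtain ⟨D, hDrect, hD, hsD⟩ := exists_countable_subset_measurableSet_generateFrom hs
  refine mk_range_le_continuum_of_countable_separating (hD.image (Prod.fst '' ·))
    fun a a' haa' => ?_
  ext b
  refine forall_generateFrom_mem_iff_mem_iff.2 (fun r hr => ?_) s hsD
  have hside := haa' _ (mem_image_of_mem _ hr)
  obtain ⟨S, -, T, -, rfl⟩ := hDrect hr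
  by_cases hb : b ∈ T
  · simpa [fst_image_prod S ⟨b, hb⟩, hb] using hside
  · simp [hb]

theorem mk_range_preimage_prodMk_right_le_continuum (hs : MeasurableSet s) :
    #(range fun b => (fun a => (a, b)) ⁻¹' s) ≤ 𝔠 :=
  mk_range_preimage_prodMk_left_le_continuum (measurable_swap hs)

end Sections

section ProductSigma

variable {Γ : Type*}

theorem productSigma_eq_prod_top : productSigma Γ = (⊤ : MeasurableSpace Γ).prod ⊤ := by
  let : MeasurableSpace Γ := ⊤
  have rectangles_eq : {r : Set (Γ × Γ) | ∃ S T : Set Γ, r = S ×ˢ T} =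
      image2 (· ×ˢ ·) {S : Set Γ | MeasurableSet S} {T : Set Γ | MeasurableSet T} := by
    ext r
    simp [eq_comm]
  exact (congrArg generateFrom rectangles_eq).trans generateFrom_prod

theorem approxSetoid_eq_ker_sections (A : Set (Γ × Γ)) :
    approxSetoid Γ A = Setoid.ker fun γ => ((fun δ => (δ, γ)) ⁻¹' A, Prod.mk γ ⁻¹' A) := by
  ext γ γ'
  rw [Setoid.ker_def, Prod.mk.injEq, Set.ext_iff, Set.ext_iff]
  exact forall_and

end ProductSigma

/-- If `A` belongs to the product σ-algebra `P(Γ) ⊗ P(Γ)`, then the induced equivalence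
relation `≈` on `Γ` has at most `𝔠` many equivalence classes. -/
theorem stmt10 (Γ : Type*) (A : Set (Γ × Γ))
    (hA : @MeasurableSet _ (productSigma Γ) A) :
    Cardinal.mk (Quotient (approxSetoid Γ A)) ≤ Cardinal.continuum := by
  let : MeasurableSpace Γ := ⊤
  let column (γ : Γ) : Set Γ := (fun δ => (δ, γ)) ⁻¹' A
  let row (γ : Γ) : Set Γ := Prod.mk γ ⁻¹' A
  have hA_prod : MeasurableSet A := by rwa [productSigma_eq_prod_top] at hA
  calc
    #(Quotient (approxSetoid Γ A)) = #(range fun γ => (column γ, row γ)) := by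
      rw [approxSetoid_eq_ker_sections]
      exact mk_congr (Setoid.quotientKerEquivRange _)
    _ ≤ #(range column ×ˢ range row) := mk_le_mk_of_subset (range_pair_subset column row)
    _ = #(range column) * #(range row) := mk_setProd _ _
    _ ≤ 𝔠 * 𝔠 := mul_le_mul' (mk_range_preimage_prodMk_right_le_continuum hA_prod)
      (mk_range_preimage_prodMk_left_le_continuum hA_prod)
    _ = 𝔠 := continuum_mul_self
end

section
/- Let Γ be an infinite set with |Γ| ≤ 𝔠 and let τ be an n-type. Then the set Y_τ of all f ∈ C(2^Γ) having type τ belongs to Ba(C_p(2^Γ)). -/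
/-- The Baire σ-algebra of the pointwise convergence topology on `C(K, ℝ)`. -/
def BaCp (K : Type*) [TopologicalSpace K] : MeasurableSpace C(K, ℝ) :=
  ⨆ t : K, MeasurableSpace.comap (fun f : C(K, ℝ) => f t) Real.measurableSpace

/-- An `n`-type: a function from `{0,1}^n` to the closed nonempty intervals of `ℝ`. -/
def IsNType {n : ℕ} (τ : (Fin n → Bool) → Set ℝ) : Prop :=
  ∀ p : Fin n → Bool, ∃ a b : ℝ, a ≤ b ∧ τ p = Set.Icc a b

/-!
Embed `Γ` into the Cantor space `Z` by `e`, and consider only the countably many points `φ ∘ e` of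
`2^Γ` with `φ : Z → {0,1}` continuous. A function `f` has type `τ` as soon as some tuple `δ` in `Z`,
possibly outside the image of `Γ`, satisfies `f (φ ∘ e) ∈ τ (φ ∘ δ)` for all `φ`: extending
`x ∈ 2^Γ` along `e` to `Z`, one finds `φ` agreeing with this extension at the entries of `δ` and on
the image of any prescribed finite subset of `Γ`, so that `φ ∘ e` is close to `x`. Each condition on
`δ` is closed, so by compactness of `Z^n` it is enough to satisfy finitely many of them at a time,
and finitely many conditions see only finitely many patterns of values of `δ`. This describes `Y_τ`
by countable operations on evaluations.
-/

open Function MeasureTheory Set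

theorem IsNType.isClosed {n : ℕ} {τ : (Fin n → Bool) → Set ℝ} (hτ : IsNType τ)
    (p : Fin n → Bool) : IsClosed (τ p) := by
  obtain ⟨a, b, -, h⟩ := hτ p
  exact h ▸ isClosed_Icc

theorem BaCp.measurable_apply {K : Type*} [TopologicalSpace K] (t : K) :
    Measurable[BaCp K] fun f : C(K, ℝ) => f t :=
  Measurable.of_comap_le <|
    le_iSup (fun t : K => MeasurableSpace.comap (fun f : C(K, ℝ) => f t) Real.measurableSpace) t

/-- `f` has type `τ`: for suitable coordinates `γ i`, the pattern of `x` at these coordinates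
confines `f x` to the set that `τ` assigns to it. The alphabet `A` and the index type `ι` stand for
`{0,1}` and `{1, …, n}`, and the sets `τ p` need not be intervals. -/
def HasType {Γ ι A Y : Type*} [TopologicalSpace A] [TopologicalSpace Y]
    (τ : (ι → A) → Set Y) (f : C(Γ → A, Y)) : Prop :=
  ∃ γ : ι → Γ, ∀ x : Γ → A, f x ∈ τ (x ∘ γ)

section FiniteValuedMaps

variable {Z A : Type*} [TopologicalSpace Z] [CompactSpace Z] [T2Space Z]
  [TotallyDisconnectedSpace Z] [TopologicalSpace A] [DiscreteTopology A]

theorem countable_continuousMap_of_finite [SecondCountableTopology Z] [Finite A] :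
    Countable C(Z, A) := by
  have : Countable (TopologicalSpace.Clopens Z) :=
    TopologicalSpace.Clopens.countable_iff_secondCountable.2 inferInstance
  let fiber (φ : C(Z, A)) (a : A) : TopologicalSpace.Clopens Z :=
    ⟨φ ⁻¹' {a}, (isClopen_discrete {a}).preimage φ.continuous⟩
  have fiber_injective : Injective fiber := fun φ ψ h => by
    ext z
    have hz : z ∈ fiber ψ (φ z) := h ▸ (rfl : φ z = φ z)
    exact hz.symm
  exact fiber_injective.countable

theorem exists_continuousMap_eqOn_of_finite [Finite A] {S : Set Z} (hS : S.Finite) (g : Z → A) :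
    ∃ φ : C(Z, A), EqOn φ g S := by
  have : Finite S := hS
  rcases isEmpty_or_nonempty Z with _ | ⟨⟨z₀⟩⟩
  · exact ⟨⟨g, continuous_of_discreteTopology⟩, eqOn_refl g S⟩
  have : Nonempty A := ⟨g z₀⟩
  obtain ⟨φ, φ_continuous, -, φ_eq⟩ := Profinite.exists_lift_of_finite_of_injective_of_surjective
    ((↑) : S → Z) continuous_subtype_val Subtype.val_injective
    (fun _ : A => ()) (surjective_to_subsingleton _) (g ∘ (↑)) continuous_of_discreteTopology
    (fun _ => ()) continuous_const rfl
  exact ⟨⟨φ, φ_continuous⟩, fun z hz => congrFun φ_eq ⟨z, hz⟩⟩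

end FiniteValuedMaps

section TupleWitness

variable {Γ ι A Y Z : Type*} [TopologicalSpace A] [DiscreteTopology A] [Finite ι]
  [TopologicalSpace Z] [CompactSpace Z]

theorem exists_forall_comp_mem_iff_forall_finset (P : C(Z, A) → Set (ι → A)) :
    (∃ δ : ι → Z, ∀ φ, φ ∘ δ ∈ P φ) ↔
      ∀ Φ : Finset C(Z, A), ∃ δ : ι → Z, ∀ φ ∈ Φ, φ ∘ δ ∈ P φ := by
  refine ⟨fun ⟨δ, hδ⟩ Φ => ⟨δ, fun φ _ => hδ φ⟩, fun h => ?_⟩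
  have isClosed_condition (φ : C(Z, A)) : IsClosed {δ : ι → Z | φ ∘ δ ∈ P φ} :=
    (isClosed_discrete (P φ)).preimage (by fun_prop : Continuous fun δ : ι → Z => φ ∘ δ)
  obtain ⟨δ, hδ⟩ := CompactSpace.iInter_nonempty isClosed_condition fun Φ => by
    obtain ⟨δ, hδ⟩ := h Φ
    exact ⟨δ, mem_iInter₂.2 hδ⟩
  exact ⟨δ, mem_iInter.1 hδ⟩

variable [Finite A] [T2Space Z] [TotallyDisconnectedSpace Z] [TopologicalSpace Y]

theorem hasType_iff_exists_forall_comp_mem [Nonempty Γ] {e : Γ → Z} (he : Injective e)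
    {τ : (ι → A) → Set Y} (hτ : ∀ p, IsClosed (τ p)) (f : C(Γ → A, Y)) :
    HasType τ f ↔ ∃ δ : ι → Z, ∀ φ : C(Z, A), f (φ ∘ e) ∈ τ (φ ∘ δ) := by
  refine ⟨fun ⟨γ, hγ⟩ => ⟨e ∘ γ, fun φ => hγ (φ ∘ e)⟩, fun ⟨δ, hδ⟩ => ⟨invFun e ∘ δ, fun x => ?_⟩⟩
  by_contra hx
  obtain ⟨F, v, hv, hFv⟩ :=
    isOpen_pi_iff.1 ((hτ (x ∘ invFun e ∘ δ)).isOpen_compl.preimage f.continuous) x hx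
  obtain ⟨φ, hφ⟩ := exists_continuousMap_eqOn_of_finite
    ((F.finite_toSet.image e).union (finite_range δ)) (x ∘ invFun e)
  have φ_comp_e_mem : φ ∘ e ∈ (F : Set Γ).pi v := fun c hc => by
    rw [comp_apply, hφ (.inl (mem_image_of_mem e hc)), comp_apply, leftInverse_invFun he]
    exact (hv c hc).2
  have φ_comp_δ : φ ∘ δ = x ∘ invFun e ∘ δ := funext fun i => hφ (.inr (mem_range_self i))
  exact hFv φ_comp_e_mem (φ_comp_δ ▸ hδ φ)

end TupleWitness

theorem measurableSet_exists_forall_finset_comp_mem {Γ ι A Z : Type*} [TopologicalSpace A]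
    [Finite A] [Finite ι] [TopologicalSpace Z] {τ : (ι → A) → Set ℝ}
    (hτ : ∀ p, MeasurableSet (τ p)) (e : Γ → Z) (Φ : Finset C(Z, A)) :
    MeasurableSet[BaCp (Γ → A)]
      {f : C(Γ → A, ℝ) | ∃ δ : ι → Z, ∀ φ ∈ Φ, f (φ ∘ e) ∈ τ (φ ∘ δ)} := by
  let pattern (δ : ι → Z) (φ : Φ) : ι → A := φ.1 ∘ δ
  have eq_iUnion_pattern :
      {f : C(Γ → A, ℝ) | ∃ δ : ι → Z, ∀ φ ∈ Φ, f (φ ∘ e) ∈ τ (φ ∘ δ)} =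
        ⋃ p ∈ range pattern, ⋂ φ : Φ, (fun f : C(Γ → A, ℝ) => f (φ.1 ∘ e)) ⁻¹' τ (p φ) := by
    ext f
    simp [pattern]
  rw [eq_iUnion_pattern]
  exact .biUnion (to_countable _) fun p _ => .iInter fun φ =>
    BaCp.measurable_apply (φ.1 ∘ e) (hτ (p φ))

theorem stmt13_general {Γ ι A : Type*} [Nonempty Γ] (hΓ : Cardinal.mk Γ ≤ Cardinal.continuum)
    [Finite ι] [Finite A] [TopologicalSpace A] [DiscreteTopology A] {τ : (ι → A) → Set ℝ}
    (hτ : ∀ p, IsClosed (τ p)) :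
    MeasurableSet[BaCp (Γ → A)] {f : C(Γ → A, ℝ) | HasType τ f} := by
  obtain ⟨e⟩ : Nonempty (Γ ↪ (ℕ → Bool)) := by
    rw [← Cardinal.lift_mk_le']
    simpa using hΓ
  have := countable_continuousMap_of_finite (Z := ℕ → Bool) (A := A)
  have eq_iInter_finset : {f : C(Γ → A, ℝ) | HasType τ f} =
      ⋂ Φ : Finset C(ℕ → Bool, A), {f | ∃ δ : ι → ℕ → Bool, ∀ φ ∈ Φ, f (φ ∘ e) ∈ τ (φ ∘ δ)} := by
    ext f
    rw [mem_iInter, mem_ofPred_eq, hasType_iff_exists_forall_comp_mem e.injective hτ]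
    exact exists_forall_comp_mem_iff_forall_finset fun φ => {p | f (φ ∘ e) ∈ τ p}
  rw [eq_iInter_finset]
  exact .iInter <| measurableSet_exists_forall_finset_comp_mem (fun p => (hτ p).measurableSet) e

/-- If `Γ` is infinite with `|Γ| ≤ 𝔠` and `τ` is an `n`-type, then the set `Y_τ` of all
`f ∈ C(2^Γ)` having type `τ` belongs to `Ba(C_p(2^Γ))`. -/
theorem stmt13 (Γ : Type*) [Infinite Γ] (hΓ : Cardinal.mk Γ ≤ Cardinal.continuum)
    (n : ℕ) (τ : (Fin n → Bool) → Set ℝ) (hτ : IsNType τ) :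
    @MeasurableSet _ (BaCp (Γ → Bool))
      {f : C(Γ → Bool, ℝ) | ∃ γ : Fin n → Γ,
        ∀ x : Γ → Bool, f x ∈ τ (fun i => x (γ i))} :=
  stmt13_general hΓ hτ.isClosed
end

section
/- Let Γ be a set, τ an n-type, and γ⁰, γ¹ ∈ Γ^n. Then γ⁰ and γ¹ are τ-proximal if and only if there is a τ-proximality relation E on {1,…,n} × {0,1} such that for all (p,i),(q,j) ∈ {1,…,n} × {0,1}, (p,i) E (q,j) implies γ^i_p = γ^j_q. -/
/-- `γ, δ ∈ Γ^n` are `τ`-proximal. -/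
def TauProximal {Γ : Type*} {n : ℕ} (τ : (Fin n → Bool) → Set ℝ)
    (γ δ : Fin n → Γ) : Prop :=
  ∀ U : Γ → Bool, (τ (fun i => U (γ i)) ∩ τ (fun i => U (δ i))).Nonempty

/-- `E` is a `τ`-proximality relation on `{1,…,n} × {0,1}`: an equivalence relation such
that `τ(g⁰) ∩ τ(g¹) ≠ ∅` whenever `g⁰, g¹ ∈ {0,1}^n` satisfy
`(p,i) E (q,j) → g^i_p = g^j_q`. -/
def IsProxRel {n : ℕ} (τ : (Fin n → Bool) → Set ℝ)
    (E : (Fin n × Bool) → (Fin n × Bool) → Prop) : Prop :=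
  Equivalence E ∧
    ∀ g : Bool → (Fin n → Bool),
      (∀ (p q : Fin n) (i j : Bool), E (p, i) (q, j) → g i p = g j q) →
      (τ (g false) ∩ τ (g true)).Nonempty

/-! The relation `γ^i_p = γ^j_q` is the largest one compatible with `γ⁰, γ¹`, and enlarging an
equivalence relation preserves being a `τ`-proximality relation, so only this relation has to be
tested. It is a `τ`-proximality relation exactly when `γ⁰` and `γ¹` are `τ`-proximal, because the
pairs `g⁰, g¹` it tests are those of the form `(1_U ∘ γ⁰, 1_U ∘ γ¹)`. -/

open scoped Function

/-- The family on `ι × {0,1}` combining two families `γ0, γ1` on `ι`: its value at `(p, i)` is the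
paper's `γ^i_p`, with `false` and `true` encoding the upper indices `0` and `1`. -/
def pairFamily {ι Γ : Type*} (γ0 γ1 : ι → Γ) (a : ι × Bool) : Γ :=
  (if a.2 then γ1 else γ0) a.1

section

variable {Γ : Type*} {n : ℕ} {τ : (Fin n → Bool) → Set ℝ}

theorem IsProxRel.mono {E E' : Fin n × Bool → Fin n × Bool → Prop} (hE : IsProxRel τ E)
    (hE' : Equivalence E') (hle : E ≤ E') : IsProxRel τ E' :=
  ⟨hE', fun g hg => hE.2 g fun p q i j h => hg p q i j (hle _ _ h)⟩

theorem tauProximal_iff_forall_factorsThrough {γ0 γ1 : Fin n → Γ} :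
    TauProximal τ γ0 γ1 ↔ ∀ g : Bool → Fin n → Bool,
      (fun a : Fin n × Bool => g a.2 a.1).FactorsThrough (pairFamily γ0 γ1) →
        (τ (g false) ∩ τ (g true)).Nonempty := by
  constructor
  · intro hprox g hg
    obtain ⟨U, hU⟩ := (Function.factorsThrough_iff _).1 hg
    have hfalse : g false = fun p => U (γ0 p) := funext fun p => congrFun hU (p, false)
    have htrue : g true = fun p => U (γ1 p) := funext fun p => congrFun hU (p, true)
    rw [hfalse, htrue]
    exact hprox U
  · intro h U
    exact h (fun i p => U (pairFamily γ0 γ1 (p, i))) fun _ _ hab => congrArg U hab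

theorem isProxRel_eq_on_pairFamily_iff {γ0 γ1 : Fin n → Γ} :
    IsProxRel τ (Eq on pairFamily γ0 γ1) ↔ TauProximal τ γ0 γ1 := by
  rw [tauProximal_iff_forall_factorsThrough]
  constructor
  · intro hker g hg
    exact hker.2 g fun _ _ _ _ h => hg h
  · intro h
    exact ⟨eq_equivalence.comap _, fun g hg => h g fun a b hab => hg a.1 b.1 a.2 b.2 hab⟩

end

theorem stmt15_general {Γ : Type*} {n : ℕ} (τ : (Fin n → Bool) → Set ℝ) (γ0 γ1 : Fin n → Γ) :
    TauProximal τ γ0 γ1 ↔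
      ∃ E : (Fin n × Bool) → (Fin n × Bool) → Prop, IsProxRel τ E ∧
        ∀ (p q : Fin n) (i j : Bool), E (p, i) (q, j) →
          (if i then γ1 else γ0) p = (if j then γ1 else γ0) q := by
  rw [← isProxRel_eq_on_pairFamily_iff]
  constructor
  · intro hker
    exact ⟨Eq on pairFamily γ0 γ1, hker, fun _ _ _ _ h => h⟩
  · rintro ⟨E, hE, hEγ⟩
    exact hE.mono (eq_equivalence.comap _) fun a b hab => hEγ a.1 b.1 a.2 b.2 hab

/-- `γ⁰, γ¹ ∈ Γ^n` are `τ`-proximal iff there is a `τ`-proximality relation `E` such that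
`(p,i) E (q,j)` implies `γ^i_p = γ^j_q`. -/
theorem stmt15 (Γ : Type*) (n : ℕ) (τ : (Fin n → Bool) → Set ℝ) (hτ : IsNType τ)
    (γ0 γ1 : Fin n → Γ) :
    TauProximal τ γ0 γ1 ↔
      ∃ E : (Fin n × Bool) → (Fin n × Bool) → Prop, IsProxRel τ E ∧
        ∀ (p q : Fin n) (i j : Bool), E (p, i) (q, j) →
          (if i then γ1 else γ0) p = (if j then γ1 else γ0) q := by
  exact stmt15_general τ γ0 γ1
end

section
/- Let K be a compact Hausdorff space such that u(F, J) ∈ Ba(C_p(K)) for every n ∈ ℕ, every closed set F ⊆ K^n and every n-tuple J of open intervals with rational endpoints. Then Ba(C_p(K)) = Bo(C_p(K)), i.e. the σ-algebra generated by the evaluation maps coincides with the Borel σ-algebra of the pointwise convergence topology on C(K). -/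
/-- The topology of pointwise convergence on `C(K, ℝ)`. -/
def ptTop (K : Type*) [TopologicalSpace K] : TopologicalSpace C(K, ℝ) :=
  TopologicalSpace.induced (fun f : C(K, ℝ) => (f : K → ℝ)) Pi.topologicalSpace

/-- `u(A, J) = {g ∈ C(K) : ∃ (x₁,…,x_n) ∈ A, g(x_k) ∈ J_k for all k}`. -/
def uSet (K : Type*) [TopologicalSpace K] (n : ℕ) (A : Set (Fin n → K))
    (J : Fin n → Set ℝ) : Set C(K, ℝ) :=
  {g | ∃ x ∈ A, ∀ k : Fin n, g (x k) ∈ J k}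

/-!
A pointwise open set `U` is a union of boxes `{g | ∀ k, g (x k) ∈ J k}` with `J` ranging over
tuples from a countable basis of `ℝ`. There may be uncountably many such boxes, but grouping them by
`J` writes `U` as a countable union of sets `u(A, J)`. Each tuple set `A` can be replaced by its
closure, because `g` is continuous and the members of `J` are open.
-/

open Set TopologicalSpace
open scoped Topology

theorem exists_fin_box_subset_of_isOpen_pi {ι X : Type*} [TopologicalSpace X] {B : Set (Set X)}
    (hB : IsTopologicalBasis B) {V : Set (ι → X)} (hV : IsOpen V) {f : ι → X} (hf : f ∈ V) :
    ∃ (n : ℕ) (x : Fin n → ι) (J : Fin n → B),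
      (∀ k, f (x k) ∈ (J k : Set X)) ∧ {g : ι → X | ∀ k, g (x k) ∈ (J k : Set X)} ⊆ V := by
  obtain ⟨I, W, hW, hWV⟩ := isOpen_pi_iff.1 hV f hf
  let x : Fin I.card → I := I.equivFin.symm
  have exists_basic (k : Fin I.card) : ∃ b : B, f (x k) ∈ (b : Set X) ∧ (b : Set X) ⊆ W (x k) := by
    obtain ⟨b, hbB, hfb, hbW⟩ :=
      hB.exists_subset_of_mem_open (hW _ (x k).2).2 (hW _ (x k).2).1
    exact ⟨⟨b, hbB⟩, hfb, hbW⟩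
  choose J hfJ hJW using exists_basic
  refine ⟨I.card, fun k => x k, J, hfJ, fun g hg => hWV fun i hi => ?_⟩
  simpa [x] using hJW _ (hg (I.equivFin ⟨i, hi⟩))

section

variable {K : Type*} [TopologicalSpace K]

theorem uSet_closure {n : ℕ} (A : Set (Fin n → K)) {J : Fin n → Set ℝ} (hJ : ∀ k, IsOpen (J k)) :
    uSet K n (closure A) J = uSet K n A J := by
  refine Subset.antisymm ?_ fun g ⟨x, hxA, hxJ⟩ => ⟨x, subset_closure hxA, hxJ⟩
  rintro g ⟨x, hxA, hxJ⟩
  have isOpen_tuples : IsOpen {y : Fin n → K | ∀ k, g (y k) ∈ J k} := by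
    rw [ofPred_forall]
    exact isOpen_iInter_of_finite fun k => (hJ k).preimage (by fun_prop)
  obtain ⟨y, hyJ, hyA⟩ := mem_closure_iff.1 hxA _ isOpen_tuples hxJ
  exact ⟨y, hyA, hyJ⟩

/-- The tuples `x` whose box `{g | ∀ k, g (x k) ∈ J k}` is contained in `U`; this is the largest
`A` with `uSet K n A J ⊆ U`. -/
def boxTuples (U : Set C(K, ℝ)) {n : ℕ} (J : Fin n → Set ℝ) : Set (Fin n → K) :=
  {x | ∀ g : C(K, ℝ), (∀ k, g (x k) ∈ J k) → g ∈ U}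

theorem iUnion_uSet_boxTuples {B : Set (Set ℝ)} (hB : IsTopologicalBasis B) {U : Set C(K, ℝ)}
    (hU : IsOpen[ptTop K] U) :
    ⋃ (n : ℕ) (J : Fin n → B), uSet K n (boxTuples U fun k => J k) (fun k => J k) = U := by
  refine Subset.antisymm (iUnion₂_subset fun _ _ g ⟨_, hxU, hxJ⟩ => hxU g hxJ) fun g hg => ?_
  obtain ⟨V, hV, rfl⟩ := hU
  obtain ⟨n, x, J, hgJ, hJV⟩ := exists_fin_box_subset_of_isOpen_pi hB hV hg
  exact mem_iUnion₂.2 ⟨n, J, x, fun f hf => hJV hf, hgJ⟩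

theorem borel_ptTop_le_of_measurableSet_uSet {m : MeasurableSpace C(K, ℝ)} {B : Set (Set ℝ)}
    (hB : IsTopologicalBasis B) (hBc : B.Countable)
    (hm : ∀ (n : ℕ) (F : Set (Fin n → K)), IsClosed F →
      ∀ J : Fin n → B, MeasurableSet (uSet K n F fun k => J k)) :
    @borel _ (ptTop K) ≤ m := by
  have : Countable B := hBc.to_subtype
  refine MeasurableSpace.generateFrom_le fun U hU => ?_
  rw [← iUnion_uSet_boxTuples hB hU]
  refine .iUnion fun n => .iUnion fun J => ?_
  rw [← uSet_closure _ fun k => hB.isOpen (J k).2]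
  exact hm n _ isClosed_closure J

theorem continuous_ptTop_eval (t : K) : @Continuous _ _ (ptTop K) _ fun f : C(K, ℝ) => f t :=
  letI := ptTop K
  (continuous_apply t).comp continuous_induced_dom

theorem BaCp_le_borel_ptTop : BaCp K ≤ @borel _ (ptTop K) :=
  iSup_le fun t => by
    let := ptTop K
    let := borel C(K, ℝ)
    have : BorelSpace C(K, ℝ) := ⟨rfl⟩
    exact (continuous_ptTop_eval t).measurable.comap_le

end

theorem stmt17_general (K : Type*) [TopologicalSpace K]
    (h : ∀ (n : ℕ) (F : Set (Fin n → K)), IsClosed F →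
      ∀ J : Fin n → Set ℝ, (∀ k, ∃ p q : ℚ, J k = Set.Ioo (p : ℝ) (q : ℝ)) →
        @MeasurableSet _ (BaCp K) (uSet K n F J)) :
    BaCp K = MeasurableSpace.generateFrom {s : Set C(K, ℝ) | @IsOpen _ (ptTop K) s} := by
  refine BaCp_le_borel_ptTop.antisymm ?_
  have countable_Ioo_rat : (⋃ (a : ℚ) (b : ℚ) (_ : a < b), {Ioo (a : ℝ) b}).Countable :=
    countable_iUnion fun _ => countable_iUnion fun _ => countable_iUnion fun _ =>
      countable_singleton _
  refine borel_ptTop_le_of_measurableSet_uSet Real.isTopologicalBasis_Ioo_rat countable_Ioo_rat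
    fun n F hF J => h n F hF _ fun k => ?_
  obtain ⟨a, b, -, hab⟩ : ∃ a b : ℚ, a < b ∧ (J k : Set ℝ) = Ioo (a : ℝ) b := by
    simpa only [mem_iUnion, mem_singleton_iff, exists_prop] using (J k).2
  exact ⟨a, b, hab⟩

/-- If `u(F, J) ∈ Ba(C_p(K))` for every `n`, every closed `F ⊆ K^n` and every `n`-tuple
`J` of open intervals with rational endpoints, then `Ba(C_p(K)) = Bo(C_p(K))`. -/
theorem stmt17 (K : Type*) [TopologicalSpace K] [CompactSpace K] [T2Space K]
    (h : ∀ (n : ℕ) (F : Set (Fin n → K)), IsClosed F →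
      ∀ J : Fin n → Set ℝ, (∀ k, ∃ p q : ℚ, J k = Set.Ioo (p : ℝ) (q : ℝ)) →
        @MeasurableSet _ (BaCp K) (uSet K n F J)) :
    BaCp K = MeasurableSpace.generateFrom {s : Set C(K, ℝ) | @IsOpen _ (ptTop K) s} :=
  stmt17_general K h
end
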